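/- Let F be a Ferrers diagram of semiperimeter n+1, T ∈ EWtab(F), S = S(T) its supplementary tableau, and CanonTop(φ_TC(T)) = (U^0, V^1, U^1, …). If j ∈ rows(F) lies in U^ℓ and k ∈ cols(F) satisfies j < k, then k ∈ V^ℓ if and only if S_{jk} = 0 and this 0 (which, since j < k, is the entry T_{jk} of a cell of T) is not a cornersupport entry. -/

import Mathlib

open Classical

/-- A Ferrers diagram of semiperimeter `n + 1`, encoded by the set of its row labels
(labels `0, …, n` run along the south-east border; `0` labels the top row and the
last label `n` is a column label). -/
structure Ferrers (n : ℕ) where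
  rows : Finset (Fin (n + 1))
  zero_mem : 0 ∈ rows
  last_not_mem : Fin.last n ∉ rows

namespace Ferrers

/-- `(i, j)` is a cell of the diagram: `i` is a row label, `j` a column label, `i < j`. -/
def Cell {n : ℕ} (F : Ferrers n) (i j : Fin (n + 1)) : Prop :=
  i ∈ F.rows ∧ j ∉ F.rows ∧ i < j

/-- Adjacency in the Ferrers graph `G(F)`. -/
def Adj {n : ℕ} (F : Ferrers n) (u v : Fin (n + 1)) : Prop :=
  F.Cell u v ∨ F.Cell v u

/-- Degree of a vertex in `G(F)`. -/
noncomputable def deg {n : ℕ} (F : Ferrers n) (v : Fin (n + 1)) : ℕ :=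
  {u | F.Adj v u}.ncard

/-- Toppling a single vertex.  The height at the sink `0` is kept equal to `c 0`
(grains sent to the sink vanish); toppling the sink sends one grain to each of
its neighbours. -/
noncomputable def topple {n : ℕ} (F : Ferrers n) (c : Fin (n + 1) → ℕ)
    (v : Fin (n + 1)) : Fin (n + 1) → ℕ :=
  fun u =>
    if u = 0 then c 0
    else if u = v then c v - F.deg v
    else if F.Adj v u then c u + 1
    else c u

/-- Toppling the vertices of a list in order. -/
noncomputable def toppleList {n : ℕ} (F : Ferrers n) (c : Fin (n + 1) → ℕ)
    (l : List (Fin (n + 1))) : Fin (n + 1) → ℕ :=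
  l.foldl F.topple c

/-- Simultaneous toppling of a set of vertices. -/
noncomputable def toppleSet {n : ℕ} (F : Ferrers n) (c : Fin (n + 1) → ℕ)
    (S : Set (Fin (n + 1))) : Fin (n + 1) → ℕ :=
  fun u =>
    if u = 0 then c 0
    else c u + {w ∈ S | F.Adj w u}.ncard - if u ∈ S then F.deg u else 0

/-- A configuration is stable if every non-sink vertex has fewer grains than its degree. -/
def Stable {n : ℕ} (F : Ferrers n) (c : Fin (n + 1) → ℕ) : Prop :=
  ∀ v, v ≠ 0 → c v < F.deg v

/-- A Dhar (burning) ordering for `c`: an ordering `v₀ = 0, v₁, …, vₙ` of all the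
vertices such that each `vᵢ` (`i ≥ 1`) is unstable after toppling `v₀, …, v_{i-1}`. -/
def DharSeq {n : ℕ} (F : Ferrers n) (c : Fin (n + 1) → ℕ) (l : List (Fin (n + 1))) : Prop :=
  l.length = n + 1 ∧ l.Nodup ∧ l.head? = some 0 ∧
    ∀ i, ∀ h : i < l.length, 1 ≤ i →
      F.deg (l.get ⟨i, h⟩) ≤ F.toppleList c (l.take i) (l.get ⟨i, h⟩)

/-- Recurrent configurations (via Dhar's criterion).  The height at the sink is
normalised to `0`. -/
def Recurrent {n : ℕ} (F : Ferrers n) (c : Fin (n + 1) → ℕ) : Prop :=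
  c 0 = 0 ∧ F.Stable c ∧ ∃ l, F.DharSeq c l

/-- Minimal recurrent configurations: recurrent with minimal total number of grains. -/
def RecMin {n : ℕ} (F : Ferrers n) (c : Fin (n + 1) → ℕ) : Prop :=
  F.Recurrent c ∧ ∀ c', F.Recurrent c' → (∑ v, c v) ≤ ∑ v, c' v

/-- Canonical toppling: block `0` is `{0}` (the sink); from then on, blocks with odd
index are the sets of currently unstable column vertices and blocks with even index
the sets of currently unstable row vertices.  The first component is the configuration
just before toppling the block recorded in the second component. -/
noncomputable def canonAux {n : ℕ} (F : Ferrers n) (c : Fin (n + 1) → ℕ) :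
    ℕ → ((Fin (n + 1) → ℕ) × Set (Fin (n + 1)))
  | 0 => (c, {0})
  | k + 1 =>
    let c' := F.toppleSet (canonAux F c k).1 (canonAux F c k).2
    (c', {v | v ≠ 0 ∧ (if k % 2 = 0 then v ∉ F.rows else v ∈ F.rows) ∧ F.deg v ≤ c' v})

/-- The `k`-th block of the canonical toppling of `c`:
`canonTop F c 0 = U⁰ = {0}`, `canonTop F c (2i-1) = Vⁱ`, `canonTop F c (2i) = Uⁱ`. -/
noncomputable def canonTop {n : ℕ} (F : Ferrers n) (c : Fin (n + 1) → ℕ) (k : ℕ) :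
    Set (Fin (n + 1)) :=
  (F.canonAux c k).2

/-- The configuration just before toppling the `k`-th block of the canonical toppling. -/
noncomputable def canonConfig {n : ℕ} (F : Ferrers n) (c : Fin (n + 1) → ℕ) (k : ℕ) :
    Fin (n + 1) → ℕ :=
  (F.canonAux c k).1

/-- The index of the block of the canonical toppling of `c` containing `v`. -/
noncomputable def bIdx {n : ℕ} (F : Ferrers n) (c : Fin (n + 1) → ℕ) (v : Fin (n + 1)) : ℕ :=
  sInf {k | v ∈ F.canonTop c k}

/-- `T` is a EW-tableau on `F` (entries of non-cells are normalised to `false`):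
the top row contains only `1`s, every other row contains a `0`, and there is no
rectangle with two diagonally opposite `0`s and two `1`s in the other corners. -/
def IsEW {n : ℕ} (F : Ferrers n) (T : Fin (n + 1) → Fin (n + 1) → Bool) : Prop :=
  (∀ i j, ¬F.Cell i j → T i j = false) ∧
  (∀ j, F.Cell 0 j → T 0 j = true) ∧
  (∀ i, i ∈ F.rows → i ≠ 0 → ∃ j, F.Cell i j ∧ T i j = false) ∧
  (∀ i i' j j', F.Cell i j → F.Cell i j' → F.Cell i' j → F.Cell i' j' →
    T i j = T i' j' → T i j' = T i' j → T i j = T i j')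

/-- The configuration associated to a tableau: row vertices count the `1`s in their
row, column vertices count the `0`s in their column (the sink is normalised to `0`). -/
noncomputable def phiTC {n : ℕ} (F : Ferrers n) (T : Fin (n + 1) → Fin (n + 1) → Bool) :
    Fin (n + 1) → ℕ :=
  fun v =>
    if v = 0 then 0
    else if v ∈ F.rows then {j | F.Cell v j ∧ T v j = true}.ncard
    else {i | F.Cell i v ∧ T i v = false}.ncard

/-- The tableau associated to a (minimal recurrent) configuration: a cell `(i, j)`
gets a `1` exactly when `i` lies in an earlier block than `j` in the canonical
toppling of `c`. -/
noncomputable def phiCT {n : ℕ} (F : Ferrers n) (c : Fin (n + 1) → ℕ) :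
    Fin (n + 1) → Fin (n + 1) → Bool :=
  fun i j => if F.Cell i j ∧ F.bIdx c i < F.bIdx c j then true else false

/-- The supplementary tableau of `T`: `S i j = 1` exactly when the row vertex `i`
lies in an earlier block than the column vertex `j` in `CanonTop (φ_TC T)`. -/
noncomputable def suppS {n : ℕ} (F : Ferrers n) (T : Fin (n + 1) → Fin (n + 1) → Bool)
    (i j : Fin (n + 1)) : Bool :=
  if F.bIdx (F.phiTC T) i < F.bIdx (F.phiTC T) j then true else false

/-- The entry of `T` in cell `(j, k)` is a cornersupport entry. -/
def Cornersupport {n : ℕ} (F : Ferrers n) (T : Fin (n + 1) → Fin (n + 1) → Bool)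
    (j k : Fin (n + 1)) : Prop :=
  ∃ j' k', j' ∈ F.rows ∧ k' ∉ F.rows ∧ j' ≠ j ∧ k' ≠ k ∧
    F.suppS T j' k' = !(T j k) ∧ F.suppS T j' k = T j k ∧ F.suppS T j k' = T j k

/-- `ν_v(T)`: the number of non-cornersupport `0`s in row `v` (if `v` is a row label),
resp. non-cornersupport `1`s in column `v` (if `v` is a column label). -/
noncomputable def nu {n : ℕ} (F : Ferrers n) (T : Fin (n + 1) → Fin (n + 1) → Bool)
    (v : Fin (n + 1)) : ℕ :=
  if v ∈ F.rows then {k | F.Cell v k ∧ T v k = false ∧ ¬F.Cornersupport T v k}.ncard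
  else {i | F.Cell i v ∧ T i v = true ∧ ¬F.Cornersupport T i v}.ncard

/-- `μ_v(c)`: if `v ∈ Uⁱ`, the number of `k ∈ Vⁱ` with `k > v`; if `v ∈ Vⁱ`,
the number of `k ∈ U^{i-1}` with `k < v`.  In both cases the relevant block is the
one immediately preceding the block of `v`. -/
noncomputable def mu {n : ℕ} (F : Ferrers n) (c : Fin (n + 1) → ℕ) (v : Fin (n + 1)) : ℕ :=
  if v ∈ F.rows then {k | v < k ∧ k ∈ F.canonTop c (F.bIdx c v - 1)}.ncard
  else {k | k < v ∧ k ∈ F.canonTop c (F.bIdx c v - 1)}.ncard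

/-- The minimal recurrent configuration with the same canonical toppling as `c`:
if `j ∈ Uⁱ` then `minrec c j = |{ℓ ∈ Vᵏ : j < ℓ, k > i}|`, and if `j ∈ Vⁱ` then
`minrec c j = |{ℓ ∈ Uᵏ : ℓ < j, k ≥ i}|` (blocks `Vᵏ` sit at odd index `2k - 1`,
blocks `Uᵏ` at even index `2k`). -/
noncomputable def minrecFun {n : ℕ} (F : Ferrers n) (c : Fin (n + 1) → ℕ) :
    Fin (n + 1) → ℕ :=
  fun j =>
    if j = 0 then 0
    else if j ∈ F.rows then
      {l | j < l ∧ ∃ k, F.bIdx c j < 2 * k + 1 ∧ l ∈ F.canonTop c (2 * k + 1)}.ncard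
    else
      {l | l < j ∧ ∃ k, F.bIdx c j < 2 * k ∧ l ∈ F.canonTop c (2 * k)}.ncard

/-- The number of edges of `G(F)` (equivalently, the number of cells of `F`). -/
noncomputable def edgeCount {n : ℕ} (F : Ferrers n) : ℕ :=
  {p : Fin (n + 1) × Fin (n + 1) | F.Cell p.1 p.2}.ncard

end Ferrers

namespace Ferrers

variable {n : ℕ} {F : Ferrers n} {T : Fin (n + 1) → Fin (n + 1) → Bool}

/-- `u` is an in-neighbour of `v` in the orientation of `G(F)` given by `T`: a `1` in cell
`(i, j)` orients the edge from `i` to `j`, a `0` from `j` to `i`. -/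
def InNbr (F : Ferrers n) (T : Fin (n + 1) → Fin (n + 1) → Bool) (v u : Fin (n + 1)) : Prop :=
  (F.Cell u v ∧ T u v = true) ∨ (F.Cell v u ∧ T v u = false)

/-- The vertices toppled before the `k`-th block of the canonical toppling. -/
def toppledBefore (F : Ferrers n) (c : Fin (n + 1) → ℕ) (k : ℕ) : Set (Fin (n + 1)) :=
  {v | ∃ i < k, v ∈ F.canonTop c i}

lemma toppledBefore_succ (c : Fin (n + 1) → ℕ) (k : ℕ) :
    F.toppledBefore c (k + 1) = F.toppledBefore c k ∪ F.canonTop c k := by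
  ext v
  simp only [toppledBefore, Set.mem_ofPred_eq, Set.mem_union, Nat.lt_succ_iff_lt_or_eq]
  constructor
  · rintro ⟨i, hi | rfl, hv⟩
    · exact Or.inl ⟨i, hi, hv⟩
    · exact Or.inr hv
  · rintro (⟨i, hi, hv⟩ | hv)
    · exact ⟨i, Or.inl hi, hv⟩
    · exact ⟨k, Or.inr rfl, hv⟩

lemma mem_canonTop_succ (c : Fin (n + 1) → ℕ) (k : ℕ) (v : Fin (n + 1)) :
    v ∈ F.canonTop c (k + 1) ↔
      v ≠ 0 ∧ (k % 2 = 0 ↔ v ∉ F.rows) ∧ F.deg v ≤ F.canonConfig c (k + 1) v := by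
  change (v ≠ 0 ∧ (if k % 2 = 0 then v ∉ F.rows else v ∈ F.rows) ∧ _) ↔ _
  by_cases h : k % 2 = 0 <;> simp [h, canonConfig, canonAux]

lemma canonConfig_succ (c : Fin (n + 1) → ℕ) (k : ℕ) :
    F.canonConfig c (k + 1) = F.toppleSet (F.canonConfig c k) (F.canonTop c k) := rfl

lemma mem_rows_iff_of_mem_canonTop {c : Fin (n + 1) → ℕ} {k : ℕ} {v : Fin (n + 1)}
    (h : v ∈ F.canonTop c k) : v ∈ F.rows ↔ k % 2 = 0 := by
  cases k with
  | zero =>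
    obtain rfl : v = 0 := h
    simp [F.zero_mem]
  | succ k =>
    have := ((mem_canonTop_succ c k v).1 h).2.1
    by_cases hv : v ∈ F.rows <;> simp only [hv] at this ⊢ <;> grind

lemma InNbr.mem_rows_iff {u v : Fin (n + 1)} (h : F.InNbr T v u) :
    u ∈ F.rows ↔ v ∉ F.rows := by
  rcases h with ⟨⟨h1, h2, -⟩, -⟩ | ⟨⟨h1, h2, -⟩, -⟩ <;> simp [h1, h2]

lemma InNbr.adj {u v : Fin (n + 1)} (h : F.InNbr T v u) : F.Adj u v :=
  h.imp And.left And.left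

lemma IsEW.not_inNbr_zero (hT : F.IsEW T) (u : Fin (n + 1)) : ¬F.InNbr T 0 u := by
  rintro (⟨⟨-, -, h⟩, -⟩ | ⟨h, h'⟩)
  · exact absurd h (Fin.not_lt_zero u)
  · simp [hT.2.1 u h] at h'

lemma IsEW.exists_inNbr (hT : F.IsEW T) {v : Fin (n + 1)} (hv : v ≠ 0) :
    ∃ u, F.InNbr T v u := by
  by_cases h : v ∈ F.rows
  · obtain ⟨j, hj⟩ := hT.2.2.1 v h hv
    exact ⟨j, Or.inr hj⟩
  · have hc : F.Cell 0 v := ⟨F.zero_mem, h, Fin.pos_of_ne_zero hv⟩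
    exact ⟨0, Or.inl ⟨hc, hT.2.1 v hc⟩⟩

/-- An adjacent pair is oriented one way or the other. -/
lemma adj_iff_inNbr {u v : Fin (n + 1)} : F.Adj u v ↔ F.InNbr T v u ∨ F.InNbr T u v := by
  unfold Adj InNbr
  cases T u v <;> cases T v u <;> simp <;> tauto

lemma InNbr.asymm {u v : Fin (n + 1)} (h : F.InNbr T v u) : ¬F.InNbr T u v := by
  unfold InNbr Cell at *
  grind

/-- The height of `φ_TC(T)` at a vertex is its out-degree. -/
lemma phiTC_eq_ncard {v : Fin (n + 1)} (hv : v ≠ 0) :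
    F.phiTC T v = {u | F.InNbr T u v}.ncard := by
  unfold phiTC InNbr Cell
  by_cases h : v ∈ F.rows <;> simp [hv, h]

lemma deg_eq {v : Fin (n + 1)} (hv : v ≠ 0) :
    F.deg v = F.phiTC T v + {u | F.InNbr T v u}.ncard := by
  rw [phiTC_eq_ncard hv, ← Set.ncard_union_eq]
  · unfold deg
    congr 1
    ext u
    exact adj_iff_inNbr
  · exact Set.disjoint_left.2 fun u h h' => h.asymm h'

/-- If the set `A` of vertices toppled so far is closed under in-neighbours, a vertex is
unstable exactly when it is not in `A` and all its in-neighbours are. -/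
lemma IsEW.deg_le_iff (hT : F.IsEW T) {A : Set (Fin (n + 1))}
    (hA : ∀ v ∈ A, ∀ u, F.InNbr T v u → u ∈ A) {v : Fin (n + 1)} (hv : v ≠ 0) {m : ℕ}
    (hm : m + (if v ∈ A then F.deg v else 0) = F.phiTC T v + {w ∈ A | F.Adj w v}.ncard) :
    F.deg v ≤ m ↔ v ∉ A ∧ ∀ u, F.InNbr T v u → u ∈ A := by
  have hd := deg_eq (F := F) (T := T) hv
  by_cases hvA : v ∈ A
  · simp only [hvA, if_true, not_true, false_and, iff_false, not_le] at hm ⊢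
    obtain ⟨u, hu⟩ := hT.exists_inNbr hv
    have hpos : 0 < {u | F.InNbr T v u}.ncard :=
      (Set.ncard_pos (Set.toFinite _)).2 ⟨u, hu⟩
    have hle : {w ∈ A | F.Adj w v}.ncard ≤ F.deg v :=
      Set.ncard_le_ncard (fun w hw => hw.2.symm) (Set.toFinite _)
    omega
  · simp only [hvA, if_false, add_zero, not_false_eq_true, true_and] at hm ⊢
    have hsub : {w ∈ A | F.Adj w v} ⊆ {u | F.InNbr T v u} := fun w hw =>
      (adj_iff_inNbr.1 hw.2).resolve_right fun h => hvA (hA w hw.1 v h)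
    rw [hm, hd, Nat.add_le_add_iff_left]
    constructor
    · intro h u hu
      have : u ∈ {w ∈ A | F.Adj w v} := Set.eq_of_subset_of_ncard_le hsub h ▸ hu
      exact this.1
    · intro h
      exact Set.ncard_le_ncard (fun u hu => ⟨h u hu, hu.adj⟩) (Set.toFinite _)

/-- The set of vertices toppled before each block is closed under in-neighbours, and the
current configuration is determined by it. -/
lemma IsEW.toppledBefore_spec (hT : F.IsEW T) (k : ℕ) :
    (∀ v ∈ F.toppledBefore (F.phiTC T) k, ∀ u, F.InNbr T v u →
      u ∈ F.toppledBefore (F.phiTC T) k) ∧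
    ∀ v, v ≠ 0 → F.canonConfig (F.phiTC T) k v +
        (if v ∈ F.toppledBefore (F.phiTC T) k then F.deg v else 0) =
      F.phiTC T v + {w ∈ F.toppledBefore (F.phiTC T) k | F.Adj w v}.ncard := by
  induction k with
  | zero => simp [toppledBefore, canonConfig, canonAux]
  | succ k ih =>
    obtain ⟨hA, hc⟩ := ih
    have hB : ∀ v ∈ F.canonTop (F.phiTC T) k, v ∉ F.toppledBefore (F.phiTC T) k ∧
        (∀ u, F.InNbr T v u → u ∈ F.toppledBefore (F.phiTC T) k) ∧
        (v ≠ 0 → F.deg v ≤ F.canonConfig (F.phiTC T) k v) := by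
      intro v hv
      cases k with
      | zero =>
        obtain rfl : v = 0 := hv
        exact ⟨by simp [toppledBefore], fun u hu => absurd hu (hT.not_inNbr_zero u),
          fun h => absurd rfl h⟩
      | succ k =>
        obtain ⟨h0, -, hd⟩ := (mem_canonTop_succ _ _ _).1 hv
        obtain ⟨h1, h2⟩ := (hT.deg_le_iff hA h0 (hc v h0)).1 hd
        exact ⟨h1, h2, fun _ => hd⟩
    rw [toppledBefore_succ]
    refine ⟨?_, fun v hv => ?_⟩
    · rintro v (hv | hv) u hu
      · exact Or.inl (hA v hv u hu)
      · exact Or.inl ((hB v hv).2.1 u hu)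
    · have hsplit : {w ∈ F.toppledBefore (F.phiTC T) k ∪ F.canonTop (F.phiTC T) k | F.Adj w v} =
          {w ∈ F.toppledBefore (F.phiTC T) k | F.Adj w v} ∪
            {w ∈ F.canonTop (F.phiTC T) k | F.Adj w v} := by
        ext w
        simp only [Set.mem_union, Set.mem_ofPred_eq]
        tauto
      rw [hsplit, Set.ncard_union_eq (Set.disjoint_left.2 fun w h h' => (hB w h'.1).1 h.1)]
      have := hc v hv
      rw [canonConfig_succ, toppleSet]
      simp only [hv, if_false, Set.mem_union]
      by_cases h : v ∈ F.canonTop (F.phiTC T) k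
      · obtain ⟨h1, -, h3⟩ := hB v h
        have := h3 hv
        simp only [h, h1, or_true, if_true, if_false] at *
        omega
      · simp only [h, or_false, if_false] at *
        omega

lemma IsEW.mem_canonTop_succ_iff (hT : F.IsEW T) (k : ℕ) (v : Fin (n + 1)) :
    v ∈ F.canonTop (F.phiTC T) (k + 1) ↔ v ≠ 0 ∧ (k % 2 = 0 ↔ v ∉ F.rows) ∧
      v ∉ F.toppledBefore (F.phiTC T) (k + 1) ∧
      ∀ u, F.InNbr T v u → u ∈ F.toppledBefore (F.phiTC T) (k + 1) := by
  rw [mem_canonTop_succ]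
  obtain ⟨hA, hc⟩ := hT.toppledBefore_spec (k + 1)
  exact and_congr_right fun h0 => and_congr_right fun _ => hT.deg_le_iff hA h0 (hc v h0)

lemma IsEW.not_mem_toppledBefore (hT : F.IsEW T) {k : ℕ} {v : Fin (n + 1)}
    (hv : v ∈ F.canonTop (F.phiTC T) k) : v ∉ F.toppledBefore (F.phiTC T) k := by
  cases k with
  | zero => simp [toppledBefore]
  | succ k => exact ((hT.mem_canonTop_succ_iff k v).1 hv).2.2.1

lemma IsEW.bIdx_eq (hT : F.IsEW T) {k : ℕ} {v : Fin (n + 1)}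
    (hv : v ∈ F.canonTop (F.phiTC T) k) : F.bIdx (F.phiTC T) v = k := by
  refine le_antisymm (Nat.sInf_le hv) (not_lt.1 fun h => ?_)
  exact hT.not_mem_toppledBefore hv
    ⟨_, h, Nat.sInf_mem (s := {k | v ∈ F.canonTop (F.phiTC T) k}) ⟨k, hv⟩⟩

/-- The orientation given by a EW-tableau has no nonempty set of rows and columns in which
every vertex has an in-neighbour. -/
lemma IsEW.acyclic (hT : F.IsEW T) (C R : Finset (Fin (n + 1)))
    (hR : R.Nonempty)
    (hrow : ∀ r ∈ R, ∃ k ∈ C, F.Cell r k ∧ T r k = false)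
    (hcol : ∀ k ∈ C, ∃ r ∈ R, F.Cell r k ∧ T r k = true) : False := by
  induction R using Finset.strongInduction with
  | H R ih =>
    set i := R.max' hR
    have hiR : i ∈ R := R.max'_mem hR
    set C' := C.filter (i < ·) with hC'
    have hcell : ∀ r ∈ R, ∀ k ∈ C', F.Cell r k := by
      intro r hr k hk
      rw [hC', Finset.mem_filter] at hk
      obtain ⟨_, _, hrk, _⟩ := hcol k hk.1
      obtain ⟨_, _, hr', _⟩ := hrow r hr
      exact ⟨hr'.1, hrk.2.1, (R.le_max' r hr).trans_lt hk.2⟩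
    obtain ⟨r, hr, hmin⟩ := R.exists_min_image (fun r => (C'.filter (T r · = false)).card) hR
    have hr1 : ∀ k ∈ C', T r k = true := by
      intro a ha
      by_contra hra
      rw [Bool.not_eq_true] at hra
      obtain ⟨r', hr', -, hr'a⟩ := hcol a (Finset.mem_filter.1 ha).1
      have : ¬C'.filter (T r' · = false) ⊆ C'.filter (T r · = false) := by
        intro hsub
        have hmem : a ∈ C'.filter (T r' · = false) := by
          rw [Finset.eq_of_subset_of_card_le hsub (hmin r' hr')]
          exact Finset.mem_filter.2 ⟨ha, hra⟩
        simp [hr'a] at hmem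
      obtain ⟨b, hb, hb'⟩ := Finset.not_subset.1 this
      obtain ⟨hbC, hr'b⟩ := Finset.mem_filter.1 hb
      have hrb : T r b = true := by
        by_contra h
        exact hb' (Finset.mem_filter.2 ⟨hbC, by simpa using h⟩)
      have := hT.2.2.2 r r' a b (hcell r hr a ha) (hcell r hr b hbC) (hcell r' hr' a ha)
        (hcell r' hr' b hbC) (by rw [hra, hr'b]) (by rw [hrb, hr'a])
      simp [hra, hrb] at this
    have hri : r ≠ i := by
      intro h
      obtain ⟨k, hk, hc, hz⟩ := hrow i hiR
      have := hr1 k (Finset.mem_filter.2 ⟨hk, hc.2.2⟩)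
      rw [h, hz] at this
      cases this
    refine ih (R.erase i) (Finset.erase_ssubset hiR) ⟨r, Finset.mem_erase.2 ⟨hri, hr⟩⟩
      (fun r hr => hrow r (Finset.mem_of_mem_erase hr)) fun k hk => ?_
    by_cases hik : i < k
    · have hkC : k ∈ C' := Finset.mem_filter.2 ⟨hk, hik⟩
      exact ⟨r, Finset.mem_erase.2 ⟨hri, hr⟩, hcell r hr k hkC, hr1 k hkC⟩
    · obtain ⟨s, hs, hc, ht⟩ := hcol k hk
      refine ⟨s, Finset.mem_erase.2 ⟨?_, hs⟩, hc, ht⟩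
      rintro rfl
      exact hik hc.2.2

lemma toppledBefore_mono (c : Fin (n + 1) → ℕ) : Monotone (F.toppledBefore c) :=
  fun _ _ h _ ⟨i, hi, hv⟩ => ⟨i, hi.trans_le h, hv⟩

lemma IsEW.exists_mem_canonTop (hT : F.IsEW T) (v : Fin (n + 1)) :
    ∃ k, v ∈ F.canonTop (F.phiTC T) k := by
  have hpred : ∀ v, (∀ k, v ∉ F.canonTop (F.phiTC T) k) →
      ∃ u, F.InNbr T v u ∧ ∀ k, u ∉ F.canonTop (F.phiTC T) k := by
    intro v hv
    by_contra! hall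
    choose! f hf using hall
    obtain ⟨N, hN⟩ := (Set.finite_range f).bddAbove
    have h0 : v ≠ 0 := by
      rintro rfl
      exact hv 0 rfl
    have hA : ∀ m, N < m → ∀ u, F.InNbr T v u → u ∈ F.toppledBefore (F.phiTC T) m :=
      fun m hm u hu => ⟨f u, (hN ⟨u, rfl⟩).trans_lt hm, hf u hu⟩
    by_cases hr : v ∈ F.rows
    · refine hv _ ((hT.mem_canonTop_succ_iff (2 * N + 1) v).2
        ⟨h0, ?_, fun ⟨i, _, hi⟩ => hv i hi, hA _ (by omega)⟩)
      simp only [hr, not_true, iff_false]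
      omega
    · refine hv _ ((hT.mem_canonTop_succ_iff (2 * N) v).2
        ⟨h0, ?_, fun ⟨i, _, hi⟩ => hv i hi, hA _ (by omega)⟩)
      simp [hr]
  by_contra! hv
  let X : Finset (Fin (n + 1)) :=
    Finset.univ.filter fun v => ∀ k, v ∉ F.canonTop (F.phiTC T) k
  have hX : ∀ v ∈ X, ∃ u ∈ X, F.InNbr T v u := by
    intro v hv
    obtain ⟨u, hu, hu'⟩ := hpred v (Finset.mem_filter.1 hv).2
    exact ⟨u, by simpa [X] using hu', hu⟩
  have hvX : v ∈ X := by simpa [X] using hv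
  refine hT.acyclic (X.filter (· ∉ F.rows)) (X.filter (· ∈ F.rows)) ?_ ?_ ?_
  · by_cases hr : v ∈ F.rows
    · exact ⟨v, Finset.mem_filter.2 ⟨hvX, hr⟩⟩
    · obtain ⟨u, hu, huv⟩ := hX v hvX
      exact ⟨u, Finset.mem_filter.2 ⟨hu, huv.mem_rows_iff.2 hr⟩⟩
  · intro r hr
    obtain ⟨hrX, hr⟩ := Finset.mem_filter.1 hr
    obtain ⟨u, hu, h | h⟩ := hX r hrX
    · exact absurd hr h.1.2.1
    · exact ⟨u, Finset.mem_filter.2 ⟨hu, h.1.2.1⟩, h⟩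
  · intro r hr
    obtain ⟨hrX, hr⟩ := Finset.mem_filter.1 hr
    obtain ⟨u, hu, h | h⟩ := hX r hrX
    · exact ⟨u, Finset.mem_filter.2 ⟨hu, h.1.1⟩, h⟩
    · exact absurd h.1.1 hr

lemma IsEW.mem_canonTop_bIdx (hT : F.IsEW T) (v : Fin (n + 1)) :
    v ∈ F.canonTop (F.phiTC T) (F.bIdx (F.phiTC T) v) :=
  Nat.sInf_mem (s := {k | v ∈ F.canonTop (F.phiTC T) k}) (hT.exists_mem_canonTop v)

lemma IsEW.bIdx_lt_of_inNbr (hT : F.IsEW T) {u v : Fin (n + 1)} (h : F.InNbr T v u) :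
    F.bIdx (F.phiTC T) u < F.bIdx (F.phiTC T) v := by
  have hv := hT.mem_canonTop_bIdx v
  cases hb : F.bIdx (F.phiTC T) v with
  | zero =>
    rw [hb] at hv
    obtain rfl : v = 0 := hv
    exact absurd h (hT.not_inNbr_zero u)
  | succ k =>
    rw [hb] at hv
    obtain ⟨i, hi, hu⟩ := ((hT.mem_canonTop_succ_iff k v).1 hv).2.2.2 u h
    rwa [hT.bIdx_eq hu]

/-- The supplementary tableau extends `T`. -/
lemma IsEW.suppS_eq (hT : F.IsEW T) {i j : Fin (n + 1)} (h : F.Cell i j) :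
    F.suppS T i j = T i j := by
  unfold suppS
  cases hij : T i j
  · simpa using (hT.bIdx_lt_of_inNbr (Or.inr ⟨h, hij⟩)).le
  · simpa using hT.bIdx_lt_of_inNbr (Or.inl ⟨h, hij⟩)

/-- A nonempty block of index at least three is preceded by a nonempty block. -/
lemma IsEW.exists_mem_canonTop_pred (hT : F.IsEW T) {m : ℕ} {v : Fin (n + 1)}
    (hv : v ∈ F.canonTop (F.phiTC T) (m + 3)) : ∃ u, u ∈ F.canonTop (F.phiTC T) (m + 2) := by
  obtain ⟨h0, hp, hn, hA⟩ := (hT.mem_canonTop_succ_iff (m + 2) v).1 hv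
  have hnot : v ∉ F.canonTop (F.phiTC T) (m + 1) := fun h => hn ⟨m + 1, by omega, h⟩
  rw [hT.mem_canonTop_succ_iff] at hnot
  have : ∃ u, F.InNbr T v u ∧ u ∉ F.toppledBefore (F.phiTC T) (m + 1) := by
    by_contra! hall
    refine hnot ⟨h0, ?_, fun h => hn (toppledBefore_mono _ (by omega) h), hall⟩
    rwa [Nat.add_mod_right] at hp
  obtain ⟨u, hu, hu'⟩ := this
  obtain ⟨i, hi, hui⟩ := hA u hu
  have h1 : m + 1 ≤ i := not_lt.1 fun h => hu' ⟨i, h, hui⟩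
  have h2 := mem_rows_iff_of_mem_canonTop hui
  have h3 := mem_rows_iff_of_mem_canonTop hv
  have h4 := hu.mem_rows_iff
  have h5 : i ≠ m + 1 := by
    rintro rfl
    have : (m + 1) % 2 = 0 ↔ ¬(m + 3) % 2 = 0 := by rw [← h2, ← h3, h4]
    omega
  obtain rfl : i = m + 2 := by omega
  exact ⟨u, hui⟩

end Ferrers

/-- **Lemma, part (a).** If the row vertex `j` lies in `Uˡ`
(`= canonTop (2l)`) and `k` is a column vertex with `j < k`, then `k ∈ Vˡ`
(`= canonTop (2l - 1)`) if and only if `S_{jk} = 0` and this `0` is not a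
cornersupport entry. -/
theorem mem_V_iff_noncornersupport_zero {n : ℕ} (F : Ferrers n)
    (T : Fin (n + 1) → Fin (n + 1) → Bool) (hT : F.IsEW T)
    (j k : Fin (n + 1)) (hj : j ∈ F.rows) (hk : k ∉ F.rows) (hjk : j < k)
    (l : ℕ) (hjU : j ∈ F.canonTop (F.phiTC T) (2 * l)) :
    k ∈ F.canonTop (F.phiTC T) (2 * l - 1) ↔
      F.suppS T j k = false ∧ ¬F.Cornersupport T j k := by
  have hbj := hT.bIdx_eq hjU
  have hkb := hT.mem_canonTop_bIdx k
  have hkodd : F.bIdx (F.phiTC T) k % 2 = 1 := by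
    have := mt (F.mem_rows_iff_of_mem_canonTop hkb).2 hk
    omega
  have hcell : F.Cell j k := ⟨hj, hk, hjk⟩
  constructor
  · intro hkV
    have hbk := hT.bIdx_eq hkV
    have hS : F.suppS T j k = false := by
      simp only [Ferrers.suppS, hbj, hbk]
      simp
    refine ⟨hS, ?_⟩
    rintro ⟨j', k', hj', -, -, -, h1, h2, h3⟩
    have hev := (Ferrers.mem_rows_iff_of_mem_canonTop (hT.mem_canonTop_bIdx j')).1 hj'
    rw [← hT.suppS_eq hcell, hS] at h1 h2 h3
    simp only [Ferrers.suppS, hbj, hbk, Bool.not_false, ite_eq_left_iff, ite_eq_right_iff,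
      Bool.true_eq_false, Bool.false_eq_true, imp_false, not_lt] at h1 h2 h3
    omega
  · rintro ⟨hS, hnc⟩
    have hle : F.bIdx (F.phiTC T) k ≤ 2 * l := by
      simpa [Ferrers.suppS, hbj] using hS
    by_cases hbk : F.bIdx (F.phiTC T) k = 2 * l - 1
    · rwa [hbk] at hkb
    refine absurd ?_ hnc
    obtain ⟨m, rfl⟩ : ∃ m, l = m + 2 := ⟨l - 2, by omega⟩
    obtain ⟨k', hk'⟩ := hT.exists_mem_canonTop_pred (m := 2 * m + 1) hjU
    obtain ⟨j', hj'⟩ := hT.exists_mem_canonTop_pred (m := 2 * m) hk'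
    have hbk' := hT.bIdx_eq hk'
    have hbj' := hT.bIdx_eq hj'
    refine ⟨j', k', (F.mem_rows_iff_of_mem_canonTop hj').2 (by omega),
      mt (F.mem_rows_iff_of_mem_canonTop hk').1 (by omega), ?_, ?_, ?_⟩
    · rintro rfl
      omega
    · rintro rfl
      omega
    · rw [← hT.suppS_eq hcell, hS]
      simp only [Ferrers.suppS, hbj, hbk', hbj', Bool.not_false, ite_eq_left_iff,
        ite_eq_right_iff, Bool.true_eq_false, Bool.false_eq_true, imp_false, not_lt]
      omega
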